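/- Let A be a C*-algebra and let F be a JB*-subtriple of A which is a Chebyshev subspace of A. Suppose a₁, a₂, b₁, b₂ ∈ F are such that a₁ + b₁ and a₂ + b₂ are not Brown–Pedersen quasi-invertible in F and aᵢ ⊥ bⱼ for all i, j ∈ {1,2}. Then L(b₁,b₂)L(a₁,a₂)(x) ∈ F for every x ∈ A, where L(u,v)(z) = (u v* z + z v* u)/2. -/

import Mathlib

lemma cheb_funs (δ : ℝ) (hδ : 0 < δ) : ∃ k m f : ℝ → ℝ,
    (Continuous k ∧ k 0 = 0) ∧ (Continuous m ∧ m 0 = 0) ∧ (Continuous f ∧ f 0 = 0) ∧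
    (∀ t, m t * (t * k t) = m t) ∧ (∀ t, m t * m t * t * f t = f t) ∧
    (∀ t, |m t * (t * m t)| ≤ 1) ∧ (∀ t, t * k t * f t = f t) ∧
    (∀ t, 0 ≤ t → |t * (1 - f t) ^ 2| ≤ 3 * δ) := by
  have hmaxpos : ∀ t : ℝ, 0 < max t δ := fun t => lt_max_of_lt_right hδ
  refine ⟨fun t => t / (max t δ) ^ 2,
    fun t => Real.sqrt (min 1 (max 0 ((t - δ) / δ)) / max t δ),
    fun t => min 1 (max 0 ((t - 2 * δ) / δ)), ⟨?_, by simp⟩, ⟨?_, ?_⟩, ⟨?_, ?_⟩,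
    ?_, ?_, ?_, ?_, ?_⟩
  · exact continuous_id.div (by fun_prop) (fun t => (pow_pos (hmaxpos t) 2).ne')
  · exact Real.continuous_sqrt.comp
      (Continuous.div (by fun_prop) (by fun_prop) (fun t => (hmaxpos t).ne'))
  · have : (0 - δ) / δ ≤ 0 := div_nonpos_of_nonpos_of_nonneg (by linarith) hδ.le
    simp only [max_eq_left this]; simp
  · fun_prop
  · have : (0 - 2 * δ) / δ ≤ 0 := div_nonpos_of_nonpos_of_nonneg (by linarith) hδ.le
    simp only [max_eq_left this]; simp
  · intro t
    rcases le_total t δ with h | h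
    · have : (t - δ) / δ ≤ 0 := div_nonpos_of_nonpos_of_nonneg (by linarith) hδ.le
      simp only [max_eq_left this]; simp
    · have ht : 0 < t := hδ.trans_le h
      have : t * (t / (max t δ) ^ 2) = 1 := by rw [max_eq_left h]; field_simp
      simp only [this, mul_one]
  · intro t
    rcases le_total t (2 * δ) with h | h
    · have : (t - 2 * δ) / δ ≤ 0 := div_nonpos_of_nonpos_of_nonneg (by linarith) hδ.le
      simp only [max_eq_left this]; simp
    · have ht : 0 < t := by linarith
      have h1 : 1 ≤ (t - δ) / δ := by rw [le_div_iff₀ hδ]; linarith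
      have h2 : max 0 ((t - δ) / δ) = (t - δ) / δ := max_eq_right (by linarith)
      have h3 : max t δ = t := max_eq_left (by linarith)
      simp only [h2, h3, min_eq_left h1]
      rw [Real.mul_self_sqrt (by positivity)]
      field_simp
  · intro t
    set q := min 1 (max 0 ((t - δ) / δ)) with hq
    have hq0 : 0 ≤ q := le_min zero_le_one (le_max_left _ _)
    have hq1 : q ≤ 1 := min_le_left _ _
    have hm := hmaxpos t
    have e : √(q / max t δ) * (t * √(q / max t δ)) = q / max t δ * t := by
      rw [mul_left_comm, Real.mul_self_sqrt (by positivity)]; ring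
    change |√(q / max t δ) * (t * √(q / max t δ))| ≤ 1
    rw [e]
    rcases le_total t δ with h | h
    · have : (t - δ) / δ ≤ 0 := div_nonpos_of_nonpos_of_nonneg (by linarith) hδ.le
      have : q = 0 := by rw [hq, max_eq_left this]; simp
      simp [this]
    · have ht : 0 < t := hδ.trans_le h
      rw [max_eq_left h, div_mul_cancel₀ _ ht.ne', abs_of_nonneg hq0]; exact hq1
  · intro t
    rcases le_total t (2 * δ) with h | h
    · have : (t - 2 * δ) / δ ≤ 0 := div_nonpos_of_nonpos_of_nonneg (by linarith) hδ.le
      simp only [max_eq_left this]; simp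
    · have ht : 0 < t := by linarith
      have : t * (t / (max t δ) ^ 2) = 1 := by
        rw [max_eq_left (by linarith)]; field_simp
      simp only [this, one_mul]
  · intro t ht
    set q := min 1 (max 0 ((t - 2 * δ) / δ)) with hq
    have hq0 : 0 ≤ q := le_min zero_le_one (le_max_left _ _)
    have hq1 : q ≤ 1 := min_le_left _ _
    change |t * (1 - q) ^ 2| ≤ 3 * δ
    rw [abs_of_nonneg (by positivity)]
    rcases le_total t (3 * δ) with h | h
    · nlinarith [mul_nonneg ht hq0, mul_nonneg ht (sub_nonneg.2 hq1),
        mul_nonneg (mul_nonneg ht hq0) (sub_nonneg.2 hq1)]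
    · have h1 : 1 ≤ (t - 2 * δ) / δ := by rw [le_div_iff₀ hδ]; linarith
      have : q = 1 := by rw [hq, max_eq_right (by linarith), min_eq_left h1]
      rw [this]; simp; linarith

section
variable {A : Type*} [NonUnitalCStarAlgebra A]

lemma cheb_norm_orth (r d : A) (h1 : star r * d = 0) (h2 : d * star r = 0) :
    ‖r + d‖ ≤ max ‖r‖ ‖d‖ := by
  have h1' : star d * r = 0 := by simpa using congrArg star h1
  have e : star (r + d) * (r + d) = star r * r + star d * d := by
    simp only [star_add, add_mul, mul_add, h1, h1']; abel
  have h := IsSelfAdjoint.norm_add_eq_max (IsSelfAdjoint.star_mul_self d)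
    (IsSelfAdjoint.star_mul_self r) (by
      rw [mul_assoc, ← mul_assoc d, h2]; simp)
  rw [add_comm, ← e, CStarRing.norm_star_mul_self, CStarRing.norm_star_mul_self,
    CStarRing.norm_star_mul_self] at h
  rcases max_cases (‖d‖ * ‖d‖) (‖r‖ * ‖r‖) with ⟨h', _⟩ | ⟨h', _⟩ <;> rw [h'] at h
  · exact le_max_of_le_right ((mul_self_eq_mul_self_iff.1 h).elim le_of_eq fun hh => by
          linarith [norm_nonneg (r+d), norm_nonneg d])
  · exact le_max_of_le_left ((mul_self_eq_mul_self_iff.1 h).elim le_of_eq fun hh => by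
          linarith [norm_nonneg (r+d), norm_nonneg r])

lemma cheb_Q (F : Submodule ℂ A)
    (hF : ∀ x ∈ F, ∀ y ∈ F, ∀ z ∈ F, (2 : ℂ)⁻¹ • (x * star y * z + z * star y * x) ∈ F)
    {x y : A} (hx : x ∈ F) (hy : y ∈ F) : x * star y * x ∈ F := by
  have := hF x hx y hy x hx
  rwa [← two_smul ℂ, smul_smul, inv_mul_cancel₀ two_ne_zero, one_smul] at this

lemma cheb_T (F : Submodule ℂ A)
    (hF : ∀ x ∈ F, ∀ y ∈ F, ∀ z ∈ F, (2 : ℂ)⁻¹ • (x * star y * z + z * star y * x) ∈ F)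
    {x y z : A} (hx : x ∈ F) (hy : y ∈ F) (hz : z ∈ F) :
    x * star y * z + z * star y * x ∈ F := by
  have := F.smul_mem 2 (hF x hx y hy z hz)
  rwa [smul_smul, mul_inv_cancel₀ two_ne_zero, one_smul] at this

lemma cheb_QQ (F : Submodule ℂ A)
    (hF : ∀ x ∈ F, ∀ y ∈ F, ∀ z ∈ F, (2 : ℂ)⁻¹ • (x * star y * z + z * star y * x) ∈ F)
    {x y z : A} (hx : x ∈ F) (hy : y ∈ F) (hz : z ∈ F) :
    x * star y * z * star y * x ∈ F := by
  have := cheb_Q F hF hx (cheb_Q F hF hy hz)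
  simpa [mul_assoc] using this

/-- Fixed points of the Peirce-like contraction given by `e` lie in `F` as soon as `e` is
orthogonal to a nonzero `d` in `F`. -/
lemma cheb_fix (F : Submodule ℂ A)
    (hF : ∀ x ∈ F, ∀ y ∈ F, ∀ z ∈ F, (2 : ℂ)⁻¹ • (x * star y * z + z * star y * x) ∈ F)
    (hCheb : ∀ x : A, ∃! v : A, v ∈ F ∧ ‖x - v‖ = Metric.infDist x (F : Set A))
    {e d : A} (he : e ∈ F) (hd : d ∈ F) (hn : ‖e‖ ≤ 1) (hd0 : d ≠ 0)
    (h1 : star e * d = 0) (h2 : d * star e = 0) (x : A)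
    (hx : e * star e * x * star e * e = x) : x ∈ F := by
  obtain ⟨v, ⟨hvF, hv⟩, huniq⟩ := hCheb x
  have hlb : ∀ w ∈ F, Metric.infDist x (F : Set A) ≤ ‖x - w‖ := fun w hw => by
    rw [← dist_eq_norm]; exact Metric.infDist_le_dist_of_mem hw
  have hPv : e * star e * v * star e * e = v := by
    refine huniq _ ⟨cheb_QQ F hF he he hvF, le_antisymm ?_ (hlb _ (cheb_QQ F hF he he hvF))⟩
    rw [← hv]
    have : x - e * star e * v * star e * e = e * (star e * ((x - v) * (star e * e))) := by
      conv_lhs => rw [← hx]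
      simp only [mul_sub, sub_mul, mul_assoc]
    rw [this]
    have hn' : ‖star e‖ ≤ 1 := by rwa [norm_star]
    have key : ∀ p q : A, ‖p‖ ≤ 1 → ‖p * q‖ ≤ ‖q‖ := fun p q hp =>
      (norm_mul_le _ _).trans (mul_le_of_le_one_left (norm_nonneg _) hp)
    refine (key _ _ hn).trans ((key _ _ hn').trans ((norm_mul_le _ _).trans ?_))
    exact mul_le_of_le_one_right (norm_nonneg _) ((key _ _ hn').trans hn)
  by_contra hxF
  set r := x - v with hr
  have hrfix : e * star e * r * star e * e = r := by
    rw [hr]; simp only [mul_sub, sub_mul, hx, hPv]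
  have hr0 : 0 < ‖r‖ := norm_pos_iff.2 fun h => hxF (by rw [sub_eq_zero.1 h]; exact hvF)
  have hd0' : 0 < ‖d‖ := norm_pos_iff.2 hd0
  set s : ℂ := ((‖r‖ / ‖d‖ : ℝ) : ℂ) with hs
  have hs0 : s ≠ 0 := by rw [hs]; exact_mod_cast (div_pos hr0 hd0').ne'
  have hsn : ‖s • d‖ = ‖r‖ := by
    rw [norm_smul, hs, Complex.norm_real, Real.norm_of_nonneg (by positivity),
      div_mul_cancel₀ _ hd0'.ne']
  have hrs : star r = star e * e * star r * e * star e := by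
    conv_lhs => rw [← hrfix]
    simp [mul_assoc]
  have o1 : star r * d = 0 := by rw [hrs, mul_assoc, h1, mul_zero]
  have o2 : d * star r = 0 := by rw [hrs]; simp only [← mul_assoc, h2, zero_mul]
  have hle := cheb_norm_orth r (s • d) (by rw [mul_smul_comm, o1, smul_zero])
    (by rw [smul_mul_assoc, o2, smul_zero])
  rw [hsn, max_self] at hle
  have hmem : v - s • d ∈ F := F.sub_mem hvF (F.smul_mem _ hd)
  have := huniq (v - s • d) ⟨hmem, le_antisymm (by
    rw [← hv, show x - (v - s • d) = r + s • d by rw [hr]; abel]; exact hle) (hlb _ hmem)⟩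
  rw [sub_eq_self] at this
  exact (smul_ne_zero hs0 hd0) this

/-- odd functional calculus stays in `F`. -/
lemma cheb_cfc (F : Submodule ℂ A) (hFc : IsClosed (F : Set A))
    (hF : ∀ x ∈ F, ∀ y ∈ F, ∀ z ∈ F, (2 : ℂ)⁻¹ • (x * star y * z + z * star y * x) ∈ F)
    {c : A} (hc : c ∈ F) (g : ℝ → ℝ) : c * cfcₙ g (star c * c) ∈ F := by
  let V : Set A := {v | v ∈ F ∧ v * (star c * c) = c * star c * v}
  have hVc : IsClosed V := hFc.inter (isClosed_eq (by fun_prop) (by fun_prop))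
  let T : NonUnitalStarSubalgebra ℂ A :=
    { carrier := {y | ∀ v ∈ V, v * y ∈ V ∧ v * star y ∈ V}
      zero_mem' := by
        intro v hv
        simp [V]
      add_mem' := by
        intro x y hx hy v hv
        obtain ⟨⟨x1, x2⟩, x3, x4⟩ := hx v hv
        obtain ⟨⟨y1, y2⟩, y3, y4⟩ := hy v hv
        refine ⟨⟨?_, ?_⟩, ?_, ?_⟩
        · rw [mul_add]; exact F.add_mem x1 y1
        · rw [mul_add, add_mul, x2, y2, mul_add]
        · rw [star_add, mul_add]; exact F.add_mem x3 y3
        · rw [star_add, mul_add, add_mul, x4, y4, mul_add]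
      mul_mem' := by
        intro x y hx hy v hv
        refine ⟨?_, ?_⟩
        · rw [← mul_assoc]; exact (hy _ (hx v hv).1).1
        · rw [star_mul, ← mul_assoc]; exact (hx _ (hy v hv).2).2
      smul_mem' := by
        intro s x hx v hv
        obtain ⟨⟨x1, x2⟩, x3, x4⟩ := hx v hv
        refine ⟨⟨?_, ?_⟩, ?_, ?_⟩
        · rw [mul_smul_comm]; exact F.smul_mem _ x1
        · rw [mul_smul_comm, smul_mul_assoc, x2, mul_smul_comm]
        · rw [star_smul, mul_smul_comm]; exact F.smul_mem _ x3
        · rw [star_smul, mul_smul_comm, smul_mul_assoc, x4, mul_smul_comm]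
      star_mem' := by
        intro x hx v hv
        exact ⟨(hx v hv).2, by rw [star_star]; exact (hx v hv).1⟩ }
  have hTc : IsClosed (T : Set A) := by
    have : (T : Set A) = ⋂ v ∈ V, ((fun y => v * y) ⁻¹' V ∩ (fun y => v * star y) ⁻¹' V) := by
      ext y; simp only [Set.mem_iInter, Set.mem_inter_iff, Set.mem_preimage]; exact Iff.rfl
    rw [this]
    exact isClosed_biInter fun v _ => (hVc.preimage (by fun_prop)).inter
      (hVc.preimage (by fun_prop))
  have hD : star c * c ∈ T := by
    have : ∀ v ∈ V, v * (star c * c) ∈ V := by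
      rintro v ⟨hv, hv'⟩
      refine ⟨?_, ?_⟩
      · have := hF v hv c hc c hc
        rwa [mul_assoc v, hv', ← two_smul ℂ, smul_smul, inv_mul_cancel₀ two_ne_zero, one_smul,
          ← hv'] at this
      · conv_lhs => rw [hv']
        rw [mul_assoc]
    intro v hv
    refine ⟨this v hv, ?_⟩
    rw [star_mul, star_star]; exact this v hv
  have hmem : cfcₙ g (star c * c) ∈ T :=
    cfcₙ_mem (𝕜' := ℂ) (hs := hTc) g hD
  exact (hmem c ⟨hc, by rw [mul_assoc]⟩).1.1

variable [PartialOrder A] [StarOrderedRing A]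

lemma cheb_lim (a : A) (f : ℝ → ℝ) (hf : Continuous f) (hf0 : f 0 = 0) (η : ℝ)
    (h : ∀ t, 0 ≤ t → |t * (1 - f t) ^ 2| ≤ η ^ 2) (hη : 0 ≤ η) :
    ‖a - a * cfcₙ f (star a * a)‖ ≤ η := by
  set D := star a * a with hD
  have hDs : IsSelfAdjoint D := IsSelfAdjoint.star_mul_self a
  have hD0 : 0 ≤ D := star_mul_self_nonneg a
  have hfs : star (cfcₙ f D) = cfcₙ f D := (cfcₙ_predicate f D : IsSelfAdjoint _)
  have e : star (a - a * cfcₙ f D) * (a - a * cfcₙ f D) =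
      cfcₙ (fun t => t * (1 - f t) ^ 2) D := by
    have e1 : (fun t => t * (1 - f t) ^ 2) = fun t => (t - t * f t) - (f t * t - f t * (t * f t)) := by
      ext t; ring
    rw [e1, cfcₙ_sub .., cfcₙ_sub .., cfcₙ_sub .., cfcₙ_mul .., cfcₙ_mul .., cfcₙ_mul .., cfcₙ_mul ..,
      cfcₙ_id' ℝ D]
    simp only [star_sub, star_mul, hfs, sub_mul, mul_sub]
    simp only [hD, mul_assoc]
    abel
  have hle : ‖cfcₙ (fun t => t * (1 - f t) ^ 2) D‖ ≤ η ^ 2 :=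
    norm_cfcₙ_le fun t ht => h t (quasispectrum_nonneg_of_nonneg D hD0 t ht)
  rw [← e, CStarRing.norm_star_mul_self, ← sq] at hle
  exact (sq_le_sq₀ (norm_nonneg _) hη).1 hle

lemma cheb_elems (D : A) (hDs : IsSelfAdjoint D) (k m f : ℝ → ℝ)
    (hk : Continuous k) (hk0 : k 0 = 0) (hm : Continuous m) (hm0 : m 0 = 0)
    (hf : Continuous f) (hf0 : f 0 = 0)
    (p1 : ∀ t, m t * (t * k t) = m t) (p2 : ∀ t, m t * m t * t * f t = f t)
    (p3 : ∀ t, |m t * (t * m t)| ≤ 1) :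
    cfcₙ m D * (D * cfcₙ k D) = cfcₙ m D ∧ cfcₙ k D * (D * cfcₙ m D) = cfcₙ m D ∧
    cfcₙ m D * cfcₙ m D * D * cfcₙ f D = cfcₙ f D ∧
    cfcₙ f D * (D * (cfcₙ m D * cfcₙ m D)) = cfcₙ f D ∧
    ‖cfcₙ m D * (D * cfcₙ m D)‖ ≤ 1 ∧ D * cfcₙ m D = cfcₙ m D * D := by
  have hmul : ∀ g h : ℝ → ℝ, Continuous g → g 0 = 0 → Continuous h → h 0 = 0 →
      cfcₙ (fun t => g t * h t) D = cfcₙ g D * cfcₙ h D := fun g h hg hg0 hh hh0 =>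
    cfcₙ_mul g h D hg.continuousOn hg0 hh.continuousOn hh0
  have hid : cfcₙ (fun t : ℝ => t) D = D := cfcₙ_id' ℝ D
  have hL : ∀ g : ℝ → ℝ, Continuous g → g 0 = 0 →
      cfcₙ (fun t => t * g t) D = D * cfcₙ g D := fun g hg hg0 => by
    rw [hmul (fun t => t) g continuous_id rfl hg hg0, hid]
  have hR : ∀ g : ℝ → ℝ, Continuous g → g 0 = 0 →
      cfcₙ (fun t => g t * t) D = cfcₙ g D * D := fun g hg hg0 => by
    rw [hmul g (fun t => t) hg hg0 continuous_id rfl, hid]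
  refine ⟨?_, ?_, ?_, ?_, ?_, ?_⟩
  · rw [← hL k hk hk0, ← hmul m (fun t => t * k t) hm hm0 (by fun_prop) (by simp)]
    simp only [p1]
  · rw [← hL m hm hm0, ← hmul k (fun t => t * m t) hk hk0 (by fun_prop) (by simp)]
    congr 1; ext t; rw [← p1 t]; linear_combination (t * k t) * p1 t
  · rw [← hmul m m hm hm0 hm hm0, ← hR (fun t => m t * m t) (by fun_prop) (by simp [hm0]),
      ← hmul (fun t => m t * m t * t) f (by fun_prop) (by simp) hf hf0]
    simp only [p2]
  · rw [← hmul m m hm hm0 hm hm0, ← hL (fun t => m t * m t) (by fun_prop) (by simp [hm0]),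
      ← hmul f (fun t => t * (m t * m t)) hf hf0 (by fun_prop) (by simp)]
    congr 1; ext t; linear_combination p2 t
  · rw [← hL m hm hm0, ← hmul m (fun t => t * m t) hm hm0 (by fun_prop) (by simp)]
    exact norm_cfcₙ_le fun t _ => p3 t
  · rw [← hL m hm hm0, ← hR m hm hm0]
    simp only [mul_comm]

lemma cheb_main (F : Submodule ℂ A) (hFc : IsClosed (F : Set A))
    (hF : ∀ x ∈ F, ∀ y ∈ F, ∀ z ∈ F, (2 : ℂ)⁻¹ • (x * star y * z + z * star y * x) ∈ F)
    (hCheb : ∀ x : A, ∃! v : A, v ∈ F ∧ ‖x - v‖ = Metric.infDist x (F : Set A))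
    {c : A} (hc : c ∈ F)
    (hBP : ¬ ∃ y ∈ F, ∀ z ∈ F,
      z - c * star y * z - z * star y * c + c * star y * z * star y * c = 0) (w : A) :
    c * w * c ∈ F := by
  set D := star c * c with hD
  have hDs : IsSelfAdjoint D := IsSelfAdjoint.star_mul_self c
  have hself : ∀ g : ℝ → ℝ, star (cfcₙ g D) = cfcₙ g D :=
    fun g => (cfcₙ_predicate g D : IsSelfAdjoint _)
  have step : ∀ δ : ℝ, 0 < δ → ∃ s : A, ‖c - s‖ ≤ δ ∧ s * w * s ∈ F := by
    intro δ hδ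
    obtain ⟨k, m, f, ⟨hk, hk0⟩, ⟨hm, hm0⟩, ⟨hf, hf0⟩, p1, p2, p3, p4, p5⟩ :=
      cheb_funs (δ ^ 2 / 3) (by positivity)
    refine ⟨c * cfcₙ f D, cheb_lim c f hf hf0 δ (fun t ht => (p5 t ht).trans_eq (by ring)) hδ.le, ?_⟩
    set K := cfcₙ k D with hK
    set M := cfcₙ m D with hM
    set f' := cfcₙ f D with hf'
    have hKs : star K = K := hself k
    have hMs : star M = M := hself m
    obtain ⟨q1, q1', q2, q2', q3, hcomm⟩ := cheb_elems D hDs k m f hk hk0 hm hm0 hf hf0 p1 p2 p3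
    rw [← hK, ← hM] at q1 q1'
    rw [← hM, ← hf'] at q2 q2'
    rw [← hM] at q3 hcomm
    have hy : c * K ∈ F := cheb_cfc F hFc hF hc k
    have he : c * M ∈ F := cheb_cfc F hFc hF hc m
    push Not at hBP
    obtain ⟨z, hz, hd0⟩ := hBP (c * K) hy
    set d := z - c * star (c * K) * z - z * star (c * K) * c
      + c * star (c * K) * z * star (c * K) * c with hd
    have hdF : d ∈ F := by
      have : d = z - (c * star (c * K) * z + z * star (c * K) * c)
        + c * star (c * K) * z * star (c * K) * c := by rw [hd]; abel
      rw [this]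
      exact F.add_mem (F.sub_mem hz (cheb_T F hF hc hy hz)) (cheb_QQ F hF hc hy hz)
    have r1 : ∀ u, M * (star c * (c * (K * u))) = M * u := by
      intro u
      have := congrArg (· * u) q1
      simpa [hD, mul_assoc] using this
    have r2 : K * (star c * (c * M)) = M := by simpa [hD, mul_assoc] using q1'
    have r2' : ∀ u, K * (star c * (c * (M * u))) = M * u := by
      intro u
      have := congrArg (· * u) q1'
      simpa [hD, mul_assoc] using this
    refine cheb_fix F hF hCheb he hdF ?_ hd0 ?_ ?_ _ ?_
    · have : ‖star (c * M) * (c * M)‖ ≤ 1 := by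
        rw [star_mul, hMs]; simpa [hD, mul_assoc] using q3
      rw [CStarRing.norm_star_mul_self] at this
      nlinarith [norm_nonneg (c * M)]
    · simp only [hd, star_mul, hMs, hKs, mul_add, mul_sub, mul_assoc, r1]
      abel
    · simp only [hd, star_mul, hMs, hKs, add_mul, sub_mul, mul_assoc, r2']
      abel
    · have s1 : c * M * star (c * M) * (c * f') = c * f' := by
        rw [star_mul, hMs]
        conv_rhs => rw [← q2]
        simp only [hD, mul_assoc]
      have s2 : c * f' * star (c * M) * (c * M) = c * f' := by
        rw [star_mul, hMs]
        conv_rhs => rw [← q2', ← mul_assoc D, hcomm]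
        simp only [hD, mul_assoc]
      calc c * M * star (c * M) * (c * f' * w * (c * f')) * star (c * M) * (c * M)
          = (c * M * star (c * M) * (c * f')) * w * (c * f' * star (c * M) * (c * M)) := by
            simp only [mul_assoc]
        _ = _ := by rw [s1, s2]
  have hcont : IsClosed {s : A | s * w * s ∈ F} :=
    hFc.preimage (f := fun s : A => s * w * s) (by fun_prop)
  have : c ∈ closure {s : A | s * w * s ∈ F} := by
    rw [Metric.mem_closure_iff]
    intro ε hε
    obtain ⟨s, hs, hsF⟩ := step (ε / 2) (by positivity)
    exact ⟨s, hsF, by rw [dist_eq_norm]; linarith⟩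
  rwa [hcont.closure_eq] at this

lemma cheb_approx (a : A) : a ∈ closure (Set.range fun y => a * star a * a * y) := by
  rw [Metric.mem_closure_iff]
  intro ε hε
  obtain ⟨k, m, f, ⟨hk, hk0⟩, ⟨hm, hm0⟩, ⟨hf, hf0⟩, p1, p2, p3, p4, p5⟩ :=
      cheb_funs ((ε / 2) ^ 2 / 3) (by positivity)
  have hDs : IsSelfAdjoint (star a * a) := IsSelfAdjoint.star_mul_self a
  have hl := cheb_lim a f hf hf0 (ε / 2) (fun t ht => (p5 t ht).trans_eq (by ring)) (by positivity)
  have q : (star a * a) * cfcₙ k (star a * a) * cfcₙ f (star a * a) = cfcₙ f (star a * a) := by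
    have : cfcₙ (fun t => t * k t * f t) (star a * a) = cfcₙ f (star a * a) := by simp only [p4]
    rwa [cfcₙ_mul .., cfcₙ_mul .., cfcₙ_id' ℝ (star a * a)] at this
  refine ⟨_, ⟨cfcₙ k (star a * a) * cfcₙ f (star a * a), rfl⟩, ?_⟩
  rw [dist_eq_norm]
  have : a * star a * a * (cfcₙ k (star a * a) * cfcₙ f (star a * a))
      = a * cfcₙ f (star a * a) := by
    conv_rhs => rw [← q]
    simp only [mul_assoc]
  simp only [this]
  linarith

lemma cheb_cross (F : Submodule ℂ A) (hFc : IsClosed (F : Set A)) {a b : A}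
    (h : ∀ w, (a + b) * w * (a + b) ∈ F) (h1 : a * star b = 0) (h2 : star b * a = 0) (w : A) :
    a * w * b ∈ F := by
  have h1' : b * star a = 0 := by simpa using congrArg star h1
  have key : ∀ y w y', a * star a * a * y * w * star (star b * star (star b) * star b * y') ∈ F := by
    intro y w y'
    have := h (star a * a * y * w * star y' * b * star b)
    convert this using 1
    have l : (a + b) * star a = a * star a := by rw [add_mul, h1', add_zero]
    have r : star b * (a + b) = star b * b := by rw [mul_add, h2, zero_add]
    calc _ = (a * star a) * (a * y * w * star y' * b) * (star b * b) := by
          simp only [star_mul, star_star, mul_assoc]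
      _ = _ := by rw [← l, ← r]; simp only [mul_assoc]
  have c1 : ∀ w y', a * w * star (star b * star (star b) * star b * y') ∈ F := by
    intro w y'
    have hcl : IsClosed {s : A | s * w * star (star b * star (star b) * star b * y') ∈ F} :=
      hFc.preimage (f := fun s : A => s * w * star (star b * star (star b) * star b * y'))
        (by fun_prop)
    refine closure_minimal ?_ hcl (cheb_approx a)
    rintro _ ⟨y, rfl⟩
    exact key y w y'
  have hcl : IsClosed {s : A | a * w * star s ∈ F} :=
      hFc.preimage (f := fun s : A => a * w * star s) (by fun_prop)
  have := closure_minimal ?_ hcl (cheb_approx (star b))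
  · simpa using this
  · rintro _ ⟨y, rfl⟩
    exact c1 w y

end

/-- Let `A` be a C*-algebra and `F` a JB*-subtriple of `A` which is a
Chebyshev subspace of `A`. Suppose `a₁, a₂, b₁, b₂ ∈ F` are such that `a₁ + b₁` and
`a₂ + b₂` are not Brown–Pedersen quasi-invertible in `F` and `aᵢ ⊥ bⱼ` for all
`i, j ∈ {1,2}`. Then `L(b₁,b₂) L(a₁,a₂) (x) ∈ F` for every `x ∈ A`, where
`L(u,v)(z) = (u v* z + z v* u)/2`. -/
theorem L_L_maps_into_cebysev_subtriple
    {A : Type*} [NonUnitalNormedRing A] [StarRing A] [CStarRing A]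
    [NormedSpace ℂ A] [IsScalarTower ℂ A A] [SMulCommClass ℂ A A]
    [StarModule ℂ A] [CompleteSpace A]
    (F : Submodule ℂ A) (hFclosed : IsClosed (F : Set A))
    (hFtriple : ∀ x ∈ F, ∀ y ∈ F, ∀ z ∈ F,
      (2 : ℂ)⁻¹ • (x * star y * z + z * star y * x) ∈ F)
    (hCheb : ∀ x : A, ∃! v : A, v ∈ F ∧ ‖x - v‖ = Metric.infDist x (F : Set A))
    (a₁ a₂ b₁ b₂ : A) (ha₁ : a₁ ∈ F) (ha₂ : a₂ ∈ F) (hb₁ : b₁ ∈ F) (hb₂ : b₂ ∈ F)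
    (hBP₁ : ¬ ∃ y ∈ F, ∀ z ∈ F,
      z - (a₁ + b₁) * star y * z - z * star y * (a₁ + b₁)
        + (a₁ + b₁) * star y * z * star y * (a₁ + b₁) = 0)
    (hBP₂ : ¬ ∃ y ∈ F, ∀ z ∈ F,
      z - (a₂ + b₂) * star y * z - z * star y * (a₂ + b₂)
        + (a₂ + b₂) * star y * z * star y * (a₂ + b₂) = 0)
    (horth : ∀ i ∈ ({a₁, a₂} : Set A), ∀ j ∈ ({b₁, b₂} : Set A),
      i * star j = 0 ∧ star j * i = 0) :
    ∀ x : A,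
      (2 : ℂ)⁻¹ • (b₁ * star b₂ * ((2 : ℂ)⁻¹ • (a₁ * star a₂ * x + x * star a₂ * a₁))
        + ((2 : ℂ)⁻¹ • (a₁ * star a₂ * x + x * star a₂ * a₁)) * star b₂ * b₁) ∈ F := by
  letI : NonUnitalCStarAlgebra A := {}
  letI : PartialOrder A := CStarAlgebra.spectralOrder A
  haveI : StarOrderedRing A := CStarAlgebra.spectralOrderedRing A
  intro x
  have hm := cheb_main F hFclosed hFtriple hCheb (F.add_mem ha₁ hb₁) hBP₁
  obtain ⟨o11, o11'⟩ := horth a₁ (by simp) b₁ (by simp)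
  obtain ⟨o12, o12'⟩ := horth a₁ (by simp) b₂ (by simp)
  have k1 : ∀ w, a₁ * w * b₁ ∈ F := cheb_cross F hFclosed hm o11 o11'
  have k2 : ∀ w, b₁ * w * a₁ ∈ F := cheb_cross F hFclosed (by rw [add_comm] at hm; exact hm)
    (by simpa using congrArg star o11) (by simpa using congrArg star o11')
  have m1 := k1 (star a₂ * x * star b₂)
  have m2 := k2 (star b₂ * x * star a₂)
  refine F.smul_mem _ ?_
  have e1 : b₁ * star b₂ * ((2 : ℂ)⁻¹ • (a₁ * star a₂ * x + x * star a₂ * a₁)) =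
      (2 : ℂ)⁻¹ • (b₁ * (star b₂ * x * star a₂) * a₁) := by
    rw [mul_smul_comm, mul_add]
    congr 1
    have : b₁ * star b₂ * (a₁ * star a₂ * x) = b₁ * (star b₂ * a₁) * (star a₂ * x) := by
      simp only [mul_assoc]
    rw [this, o12']
    simp [mul_assoc]
  have e2 : ((2 : ℂ)⁻¹ • (a₁ * star a₂ * x + x * star a₂ * a₁)) * star b₂ * b₁ =
      (2 : ℂ)⁻¹ • (a₁ * (star a₂ * x * star b₂) * b₁) := by
    rw [smul_mul_assoc, smul_mul_assoc, add_mul, add_mul]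
    congr 1
    have : x * star a₂ * a₁ * star b₂ * b₁ = x * star a₂ * (a₁ * star b₂) * b₁ := by
      simp only [mul_assoc]
    rw [this, o12]
    simp [mul_assoc]
  rw [e1, e2]
  exact F.add_mem (F.smul_mem _ m2) (F.smul_mem _ m1)
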